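/- Let S be a set of n points in ℝ^d, let 0 < ε < 1 and δ > 0, and suppose S satisfies the first stability condition: for every subset S'' ⊆ S with |S''| ≥ (1−ε)n and every unit vector v ∈ ℝ^d, |(1/|S''|) · Σ_{s∈S''} v·(s − μ_S)| ≤ δ. Then for every ε' with 0 < ε' ≤ ε such that nε' is a positive integer, there is no subset S_{ε'} ⊆ S with |S_{ε'}| = nε' and no unit vector v such that |(1/(nε')) · Σ_{s∈S_{ε'}} v·(s − μ_S)| > 2δ/ε'. -/

import Mathlib

open scoped RealInnerProductSpace

/-- Empirical mean of a finite set of points in `ℝ^d`. -/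
noncomputable def empMean {d : ℕ} (A : Finset (EuclideanSpace ℝ (Fin d))) :
    EuclideanSpace ℝ (Fin d) :=
  (A.card : ℝ)⁻¹ • ∑ a ∈ A, a

/-- A bound on the absolute value of an average bounds the absolute value of the sum. -/
theorem abs_sum_le_card_mul_of_abs_average_le {α : Type*} (U : Finset α) (f : α → ℝ) {δ : ℝ}
    (h : |(U.card : ℝ)⁻¹ * ∑ s ∈ U, f s| ≤ δ) : |∑ s ∈ U, f s| ≤ U.card * δ := by
  rcases U.eq_empty_or_nonempty with rfl | hU
  · simp
  · have hpos : (0 : ℝ) < U.card := Nat.cast_pos.mpr hU.card_pos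
    rwa [abs_mul, abs_of_pos (inv_pos.mpr hpos), inv_mul_le_iff₀ hpos] at h

/-- If `S` (of size `n`) satisfies the first stability condition with parameters
`(ε, δ)`, then for every `0 < ε' ≤ ε` with `nε'` a positive integer, there is no
subset of `S` of size `nε'` and unit vector `v` along which the subset's average
deviation from `μ_S` exceeds `2δ/ε'`. -/
theorem stmt_0 {d : ℕ} (S : Finset (EuclideanSpace ℝ (Fin d))) (n : ℕ) (hn : S.card = n)
    (ε δ : ℝ) (hε0 : 0 < ε) (hε1 : ε < 1) (hδ : 0 < δ)
    (hstab : ∀ S'' ⊆ S, (1 - ε) * n ≤ (S''.card : ℝ) →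
      ∀ v : EuclideanSpace ℝ (Fin d), ‖v‖ = 1 →
        |(S''.card : ℝ)⁻¹ * ∑ s ∈ S'', ⟪v, s - empMean S⟫| ≤ δ)
    (ε' : ℝ) (hε'0 : 0 < ε') (hε' : ε' ≤ ε) (m : ℕ) (hm : 0 < m) (hmε' : (m : ℝ) = n * ε') :
    ¬ ∃ (Sε' : Finset (EuclideanSpace ℝ (Fin d))) (v : EuclideanSpace ℝ (Fin d)),
        Sε' ⊆ S ∧ Sε'.card = m ∧ ‖v‖ = 1 ∧
        |(n * ε')⁻¹ * ∑ s ∈ Sε', ⟪v, s - empMean S⟫| > 2 * δ / ε' := by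
  classical
  rintro ⟨T, v, hTS, hTcard, hv, hlt⟩
  have hn0 : (0 : ℝ) ≤ n := n.cast_nonneg
  have hm0 : (0 : ℝ) < n * ε' := hmε' ▸ Nat.cast_pos.mpr hm
  have hbound : ∀ U ⊆ S, (1 - ε) * n ≤ (U.card : ℝ) →
      |∑ s ∈ U, ⟪v, s - empMean S⟫| ≤ n * δ := fun U hU hcard =>
    (abs_sum_le_card_mul_of_abs_average_le U _ (hstab U hU hcard v hv)).trans
      (mul_le_mul_of_nonneg_right
        (Nat.cast_le.mpr (hn ▸ Finset.card_le_card hU)) hδ.le)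
  have hcard : ((S \ T).card : ℝ) + n * ε' = n := by
    rw [← hmε', ← hTcard, ← hn]
    exact_mod_cast Finset.card_sdiff_add_card_eq_card hTS
  have hS := hbound S subset_rfl (by rw [hn]; nlinarith)
  have hST := hbound (S \ T) Finset.sdiff_subset (by nlinarith)
  have hsum := Finset.sum_sdiff (f := fun s => ⟪v, s - empMean S⟫) hTS
  have hT : |∑ s ∈ T, ⟪v, s - empMean S⟫| ≤ 2 * (n * δ) := by
    rw [abs_le] at hS hST ⊢
    constructor <;> linarith
  refine hlt.not_ge ?_
  rw [abs_mul, abs_of_pos (inv_pos.mpr hm0), inv_mul_le_iff₀ hm0]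
  calc _ ≤ 2 * (n * δ) := hT
    _ = n * ε' * (2 * δ / ε') := by field_simp
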